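/- Let T > 1. There exists a constant C > 0 such that every classical solution u of the one-dimensional wave equation on [0,T]×[−1,1] with Dirichlet boundary conditions whose initial data are supported in [−1/4,1/4] satisfies ∫_{−1}^{1} ( (∂ₓu(0,x))² + (∂ₜu(0,x))² ) dx ≤ C ∫_0^T ∫_ω (∂ₜu(t,x))² dx dt, where ω = (−1,−3/4) ∪ (3/4,1). -/

import Mathlib

open MeasureTheory

/-- Partial derivative in time of a function of (time, space). -/
noncomputable def pdt (u : ℝ → ℝ → ℝ) : ℝ → ℝ → ℝ := fun t x => deriv (fun s => u s x) t

/-- Partial derivative in space of a function of (time, space). -/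
noncomputable def pdx (u : ℝ → ℝ → ℝ) : ℝ → ℝ → ℝ := fun t x => deriv (fun y => u t y) x

/-!
Proof idea. The wave equation makes `w = ∂ₜu - ∂ₓu` constant along each right-going characteristic
`x - t = y`. On such a line `v x = u (x - y) x` satisfies `v' = 2 ∂ₜu - w`. When the line crosses
the observed interval, pairing this identity with a bump supported there bounds `w ^ 2` by the
integrals of `(∂ₜu) ^ 2` and `v ^ 2` over the crossing. There `u` vanishes initially, so `v` is a
time integral of `∂ₜu`. Integrating over the initial position `y` controls `∂ₜu - ∂ₓu` at time `0`
by the observed velocity, and reflecting in space controls `∂ₜu + ∂ₓu`.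
-/

open Set Function Topology

section IntervalIntegral

variable {a b c d : ℝ}

lemma sq_intervalIntegral_le {f : ℝ → ℝ} (hab : a ≤ b) (hf : IntervalIntegrable f volume a b)
    (hf2 : IntervalIntegrable (fun x => f x ^ 2) volume a b) :
    (∫ x in a..b, f x) ^ 2 ≤ (b - a) * ∫ x in a..b, f x ^ 2 := by
  rcases hab.eq_or_lt with rfl | hlt
  · simp
  have hpos : 0 < b - a := sub_pos.mpr hlt
  set m := ∫ x in a..b, f x with hm
  have hvar : 0 ≤ ∫ x in a..b, ((b - a) * f x ^ 2 - 2 * m * f x + m ^ 2 / (b - a)) :=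
    intervalIntegral.integral_nonneg hab fun x _ => by
      have hsquare : (b - a) * f x ^ 2 - 2 * m * f x + m ^ 2 / (b - a)
          = ((b - a) * f x - m) ^ 2 / (b - a) := by
        field_simp
        ring
      rw [hsquare]
      positivity
  rw [intervalIntegral.integral_add ((hf2.const_mul _).sub (hf.const_mul _))
      intervalIntegrable_const, intervalIntegral.integral_sub (hf2.const_mul _) (hf.const_mul _),
    intervalIntegral.integral_const_mul, intervalIntegral.integral_const_mul,
    intervalIntegral.integral_const, smul_eq_mul, ← hm, mul_div_cancel₀ _ hpos.ne'] at hvar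
  linarith

lemma intervalIntegral_sub_mul_sub (a b : ℝ) :
    ∫ x in a..b, (x - a) * (b - x) = (b - a) ^ 3 / 6 := by
  have hderiv (x : ℝ) : HasDerivAt (fun x => (b - a) * (x - a) ^ 2 / 2 - (x - a) ^ 3 / 3)
      ((x - a) * (b - x)) x := by
    have hx := (hasDerivAt_id x).sub_const a
    exact ((((hx.pow 2).const_mul (b - a)).div_const 2).sub ((hx.pow 3).div_const 3)).congr_deriv
      (by simp only [id_eq, Nat.cast_ofNat, Nat.add_one_sub_one]; ring)
  rw [intervalIntegral.integral_eq_sub_of_hasDerivAt (fun x _ => hderiv x)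
    (Continuous.intervalIntegrable (by fun_prop) _ _)]
  ring

-- Pairing `v' = z - w` with the bump `(x - a) * (b - x)`, which vanishes at both ends, moves the
-- derivative off `v`.
lemma const_mul_eq_integral_of_hasDerivAt_sub_const {v z : ℝ → ℝ} {w : ℝ} (hab : a ≤ b)
    (hv : ContinuousOn v (Icc a b)) (hz : ContinuousOn z (Icc a b))
    (hderiv : ∀ x ∈ Ioo a b, HasDerivAt v (z x - w) x) :
    w * ((b - a) ^ 3 / 6) = ∫ x in a..b, ((x - a) * (b - x) * z x + (a + b - 2 * x) * v x) := by
  have hbump (x : ℝ) : HasDerivAt (fun x => (x - a) * (b - x)) (a + b - 2 * x) x :=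
    (((hasDerivAt_id x).sub_const a).mul ((hasDerivAt_id x).const_sub b)).congr_deriv
      (by simp only [id_eq]; ring)
  rw [← uIcc_of_le hab] at hv hz
  have hvi := hv.intervalIntegrable (μ := volume)
  have hzi := hz.intervalIntegrable (μ := volume)
  have hparts : ∫ x in a..b, ((a + b - 2 * x) * v x + (x - a) * (b - x) * (z x - w)) = 0 := by
    rw [intervalIntegral.integral_deriv_mul_eq_sub_of_hasDeriv_right
      (u := fun x => (x - a) * (b - x)) (by fun_prop) hv
      (fun x _ => (hbump x).hasDerivWithinAt) _
      (Continuous.intervalIntegrable (by fun_prop) _ _) (hzi.sub intervalIntegrable_const)]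
    · simp
    · rw [min_eq_left hab, max_eq_right hab]
      exact fun x hx => (hderiv x hx).hasDerivWithinAt
  rw [← intervalIntegral_sub_mul_sub, ← sub_eq_zero, ← intervalIntegral.integral_const_mul,
    ← intervalIntegral.integral_sub (Continuous.intervalIntegrable (by fun_prop) _ _),
    ← neg_eq_zero, ← intervalIntegral.integral_neg, ← hparts]
  · exact intervalIntegral.integral_congr fun x _ => by ring
  · exact (hzi.continuousOn_mul (by fun_prop)).add (hvi.continuousOn_mul (by fun_prop))

lemma sq_bump_mul_add_le {x : ℝ} (hx : x ∈ Icc a b) (z v : ℝ) :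
    ((x - a) * (b - x) * z + (a + b - 2 * x) * v) ^ 2 ≤
      (b - a) ^ 4 / 8 * z ^ 2 + 2 * (b - a) ^ 2 * v ^ 2 := by
  have hbump0 : 0 ≤ (x - a) * (b - x) := mul_nonneg (sub_nonneg.mpr hx.1) (sub_nonneg.mpr hx.2)
  have hbump : (x - a) * (b - x) ≤ (b - a) ^ 2 / 4 := by linarith [sq_nonneg (a + b - 2 * x)]
  have hslope : (a + b - 2 * x) ^ 2 ≤ (b - a) ^ 2 := by linarith
  calc ((x - a) * (b - x) * z + (a + b - 2 * x) * v) ^ 2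
      ≤ 2 * (((x - a) * (b - x) * z) ^ 2 + ((a + b - 2 * x) * v) ^ 2) := add_sq_le
    _ = 2 * (((x - a) * (b - x)) ^ 2 * z ^ 2 + (a + b - 2 * x) ^ 2 * v ^ 2) := by ring
    _ ≤ 2 * (((b - a) ^ 2 / 4) ^ 2 * z ^ 2 + (b - a) ^ 2 * v ^ 2) := by gcongr
    _ = _ := by ring

lemma sq_le_of_hasDerivAt_sub_const {v z : ℝ → ℝ} {w : ℝ} (hab : a < b)
    (hv : ContinuousOn v (Icc a b)) (hz : ContinuousOn z (Icc a b))
    (hderiv : ∀ x ∈ Ioo a b, HasDerivAt v (z x - w) x) :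
    w ^ 2 ≤ 9 / (2 * (b - a)) * (∫ x in a..b, z x ^ 2) +
      72 / (b - a) ^ 3 * ∫ x in a..b, v x ^ 2 := by
  have hlen : 0 < b - a := sub_pos.mpr hab
  have hw := const_mul_eq_integral_of_hasDerivAt_sub_const hab.le hv hz hderiv
  rw [← uIcc_of_le hab.le] at hv hz
  set F : ℝ → ℝ := fun x => (x - a) * (b - x) * z x + (a + b - 2 * x) * v x
  have hF : ContinuousOn F (uIcc a b) := by fun_prop
  have hz2 : IntervalIntegrable (fun x => z x ^ 2) volume a b := (hz.pow 2).intervalIntegrable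
  have hv2 : IntervalIntegrable (fun x => v x ^ 2) volume a b := (hv.pow 2).intervalIntegrable
  have hF2 : IntervalIntegrable (fun x => F x ^ 2) volume a b := (hF.pow 2).intervalIntegrable
  have hint : ∫ x in a..b, F x ^ 2 ≤ (b - a) ^ 4 / 8 * (∫ x in a..b, z x ^ 2) +
      2 * (b - a) ^ 2 * ∫ x in a..b, v x ^ 2 := by
    rw [← intervalIntegral.integral_const_mul, ← intervalIntegral.integral_const_mul,
      ← intervalIntegral.integral_add (hz2.const_mul _) (hv2.const_mul _)]
    exact intervalIntegral.integral_mono_on hab.le hF2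
      ((hz2.const_mul _).add (hv2.const_mul _)) fun x hx => sq_bump_mul_add_le hx _ _
  have hCS := sq_intervalIntegral_le hab.le hF.intervalIntegrable hF2
  rw [← hw] at hCS
  calc w ^ 2 = 36 / (b - a) ^ 6 * (w * ((b - a) ^ 3 / 6)) ^ 2 := by field_simp; norm_num
    _ ≤ 36 / (b - a) ^ 6 * ((b - a) * ((b - a) ^ 4 / 8 * (∫ x in a..b, z x ^ 2) +
        2 * (b - a) ^ 2 * ∫ x in a..b, v x ^ 2)) := by
      gcongr
      exact hCS.trans (by gcongr)
    _ = _ := by field_simp; ring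

lemma intervalIntegral_swap_of_continuous {g : ℝ → ℝ → ℝ} (hg : Continuous (uncurry g))
    (a b c d : ℝ) :
    ∫ x in a..b, ∫ y in c..d, g x y = ∫ y in c..d, ∫ x in a..b, g x y :=
  intervalIntegral_intervalIntegral_swap <|
    (hg.continuousOn.integrableOn_compact (isCompact_uIcc.prod isCompact_uIcc)).mono_set <|
      prod_mono uIoc_subset_uIcc uIoc_subset_uIcc

-- The shear `(y, x) ↦ (x - y, x)` maps the rectangle injectively into `[0, T] × [a, b]`.
lemma intervalIntegral_comp_shear_le {g : ℝ → ℝ → ℝ} {T : ℝ} (hg : Continuous (uncurry g))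
    (hg0 : ∀ t x, 0 ≤ g t x) (hcd : c ≤ d) (hab : a ≤ b) (hda : d ≤ a) (hbT : b - c ≤ T) :
    ∫ y in c..d, ∫ x in a..b, g (x - y) x ≤ ∫ t in (0 : ℝ)..T, ∫ x in a..b, g t x := by
  have hshear : Continuous (uncurry fun x y => g (x - y) x) :=
    hg.comp (by fun_prop : Continuous fun p : ℝ × ℝ => (p.1 - p.2, p.1))
  have hswap : Continuous (uncurry fun x t => g t x) := hg.comp continuous_swap
  rw [intervalIntegral_swap_of_continuous (g := fun y x => g (x - y) x)
      (hshear.comp continuous_swap), intervalIntegral_swap_of_continuous hg]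
  refine intervalIntegral.integral_mono_on hab
    (intervalIntegral.continuous_parametric_intervalIntegral_of_continuous' hshear c d
      |>.intervalIntegrable a b)
    (intervalIntegral.continuous_parametric_intervalIntegral_of_continuous' hswap 0 T
      |>.intervalIntegrable a b) fun x hx => ?_
  rw [intervalIntegral.integral_comp_sub_left (fun t => g t x)]
  exact intervalIntegral.integral_mono_interval (by linarith [hx.1]) (by linarith)
    (by linarith [hx.2]) (.of_forall fun t => hg0 t x)
    (Continuous.intervalIntegrable (by fun_prop) _ _)

end IntervalIntegral

/-- A `C²` solution of the wave equation on `[0, T] × [-L, L]`. No boundary condition is imposed,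
and the equation is only required in the interior. -/
structure IsWaveSolution (T L : ℝ) (u : ℝ → ℝ → ℝ) : Prop where
  contDiffOn : ContDiffOn ℝ 2 (uncurry u) (Icc 0 T ×ˢ Icc (-L) L)
  wave_eq : ∀ t ∈ Ioo 0 T, ∀ x ∈ Ioo (-L) L, pdt (pdt u) t x = pdx (pdx u) t x

/-- `D` is the differential of `u` on `[0, T] × [-L, L]`, one-sided on the boundary, extended to a
continuous map on the whole plane. -/
structure IsExtendedDifferential (T L : ℝ) (u : ℝ → ℝ → ℝ) (D : ℝ × ℝ → ℝ × ℝ →L[ℝ] ℝ) :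
    Prop where
  continuous : Continuous D
  hasFDerivWithinAt : ∀ p ∈ Icc 0 T ×ˢ Icc (-L) L,
    HasFDerivWithinAt (uncurry u) (D p) (Icc 0 T ×ˢ Icc (-L) L) p

lemma exists_continuous_hasFDerivWithinAt {E F : Type*} [NormedAddCommGroup E] [NormedSpace ℝ E]
    [FiniteDimensional ℝ E] [NormedAddCommGroup F] [NormedSpace ℝ F] [FiniteDimensional ℝ F]
    {f : E → F} {s : Set E} (hs : IsClosed s) (hs' : UniqueDiffOn ℝ s) (hf : ContDiffOn ℝ 1 f s) :
    ∃ D : E → E →L[ℝ] F, Continuous D ∧ ∀ p ∈ s, HasFDerivWithinAt f (D p) s p := by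
  obtain ⟨D, hD⟩ := ContinuousMap.exists_restrict_eq hs
    ⟨_, (hf.continuousOn_fderivWithin hs' le_rfl).domRestrict⟩
  refine ⟨D, D.continuous, fun p hp => ?_⟩
  rw [show D p = fderivWithin ℝ f s p from DFunLike.congr_fun hD ⟨p, hp⟩]
  exact (hf.differentiableOn one_ne_zero p hp).hasFDerivWithinAt

lemma hasFDerivAt_fderiv_of_contDiffAt {E F : Type*} [NormedAddCommGroup E] [NormedSpace ℝ E]
    [NormedAddCommGroup F] [NormedSpace ℝ F] {f : E → F} {p : E} (hf : ContDiffAt ℝ 2 f p) :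
    HasFDerivAt (fderiv ℝ f) (fderiv ℝ (fderiv ℝ f) p) p :=
  ((hf.fderiv_right (m := 1) (by norm_num)).differentiableAt one_ne_zero).hasFDerivAt

section Partials

variable {u : ℝ → ℝ → ℝ} {t x : ℝ}

lemma pdt_eq_of_hasFDerivAt {u' : ℝ × ℝ →L[ℝ] ℝ} (hu : HasFDerivAt (uncurry u) u' (t, x)) :
    pdt u t x = u' (1, 0) :=
  (hu.comp_hasDerivAt (f := fun s => (s, x)) t
    ((hasDerivAt_id t).prodMk (hasDerivAt_const t x))).deriv

lemma pdx_eq_of_hasFDerivAt {u' : ℝ × ℝ →L[ℝ] ℝ} (hu : HasFDerivAt (uncurry u) u' (t, x)) :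
    pdx u t x = u' (0, 1) :=
  (hu.comp_hasDerivAt (f := fun y => (t, y)) x
    ((hasDerivAt_const x t).prodMk (hasDerivAt_id x))).deriv

lemma pdt_pdt_sub_pdx_pdx_eq (hu : ContDiffAt ℝ 2 (uncurry u) (t, x)) :
    pdt (pdt u) t x - pdx (pdx u) t x =
      fderiv ℝ (fderiv ℝ (uncurry u)) (t, x) (1, 1) (1, -1) := by
  set M := fderiv ℝ (fderiv ℝ (uncurry u)) (t, x)
  have hM (e : ℝ × ℝ) :
      HasFDerivAt (fun p => fderiv ℝ (uncurry u) p e) (M.flip e) (t, x) :=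
    (hasFDerivAt_fderiv_of_contDiffAt hu).clm_apply (hasFDerivAt_const e _) |>.congr_fderiv
      (by simp [M])
  have hdiff : ∀ᶠ p in 𝓝 (t, x), HasFDerivAt (uncurry u) (fderiv ℝ (uncurry u) p) p :=
    (hu.eventually (by simp)).mono fun p hp => (hp.differentiableAt two_ne_zero).hasFDerivAt
  have htt : pdt (pdt u) t x = M (1, 0) (1, 0) :=
    pdt_eq_of_hasFDerivAt (u' := M.flip (1, 0)) <| (hM (1, 0)).congr_of_eventuallyEq <|
      hdiff.mono fun _ hp => pdt_eq_of_hasFDerivAt hp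
  have hxx : pdx (pdx u) t x = M (0, 1) (0, 1) :=
    pdx_eq_of_hasFDerivAt (u' := M.flip (0, 1)) <| (hM (0, 1)).congr_of_eventuallyEq <|
      hdiff.mono fun _ hp => pdx_eq_of_hasFDerivAt hp
  have hsymm : M (1, 0) (0, 1) = M (0, 1) (1, 0) :=
    hu.isSymmSndFDerivAt (by simp) (1, 0) (0, 1)
  rw [show ((1 : ℝ), (1 : ℝ)) = (1, 0) + (0, 1) by simp,
    show ((1 : ℝ), (-1 : ℝ)) = (1, 0) - (0, 1) by simp, htt, hxx]
  simp only [map_add, map_sub, add_apply, hsymm]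
  ring

end Partials

lemma sq_deriv_le_sq_derivWithin {f : ℝ → ℝ} {s : Set ℝ} {x : ℝ} (hs : UniqueDiffWithinAt ℝ s x) :
    deriv f x ^ 2 ≤ derivWithin f s x ^ 2 := by
  by_cases hf : DifferentiableAt ℝ f x
  · rw [hf.derivWithin hs]
  · rw [deriv_zero_of_not_differentiableAt hf, zero_pow two_ne_zero]
    exact sq_nonneg _

lemma IsWaveSolution.exists_isExtendedDifferential {T L : ℝ} {u : ℝ → ℝ → ℝ}
    (hu : IsWaveSolution T L u) (hT : 0 < T) (hL : 0 < L) :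
    ∃ D, IsExtendedDifferential T L u D := by
  obtain ⟨D, hDc, hD⟩ := exists_continuous_hasFDerivWithinAt (isClosed_Icc.prod isClosed_Icc)
    ((uniqueDiffOn_Icc hT).prod (uniqueDiffOn_Icc (by linarith)))
    (hu.contDiffOn.of_le one_le_two)
  exact ⟨D, hDc, hD⟩

namespace IsExtendedDifferential

variable {T L t x y : ℝ} {u : ℝ → ℝ → ℝ} {D : ℝ × ℝ → ℝ × ℝ →L[ℝ] ℝ}

lemma hasDerivWithinAt_time (hD : IsExtendedDifferential T L u D) (ht : t ∈ Icc 0 T)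
    (hx : x ∈ Icc (-L) L) :
    HasDerivWithinAt (fun s => u s x) (D (t, x) (1, 0)) (Icc 0 T) t :=
  (hD.hasFDerivWithinAt (t, x) ⟨ht, hx⟩).comp_hasDerivWithinAt (f := fun s => (s, x)) t
    ((hasDerivWithinAt_id t _).prodMk (hasDerivWithinAt_const t _ x)) fun _ hs => ⟨hs, hx⟩

lemma hasDerivWithinAt_space (hD : IsExtendedDifferential T L u D) (ht : t ∈ Icc 0 T)
    (hx : x ∈ Icc (-L) L) :
    HasDerivWithinAt (u t) (D (t, x) (0, 1)) (Icc (-L) L) x :=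
  (hD.hasFDerivWithinAt (t, x) ⟨ht, hx⟩).comp_hasDerivWithinAt (f := fun y => (t, y)) x
    ((hasDerivWithinAt_const x _ t).prodMk (hasDerivWithinAt_id x _)) fun _ hy => ⟨ht, hy⟩

lemma pdt_eq (hD : IsExtendedDifferential T L u D) (ht : t ∈ Ioo 0 T) (hx : x ∈ Icc (-L) L) :
    pdt u t x = D (t, x) (1, 0) :=
  ((hD.hasDerivWithinAt_time (Ioo_subset_Icc_self ht) hx).hasDerivAt
    (Icc_mem_nhds ht.1 ht.2)).deriv

lemma pdx_eq (hD : IsExtendedDifferential T L u D) (ht : t ∈ Icc 0 T) (hx : x ∈ Ioo (-L) L) :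
    pdx u t x = D (t, x) (0, 1) :=
  ((hD.hasDerivWithinAt_space ht (Ioo_subset_Icc_self hx)).hasDerivAt
    (Icc_mem_nhds hx.1 hx.2)).deriv

-- The values of `u` at negative times are arbitrary, so `pdt u 0 x` is either the one-sided
-- derivative or the junk value `0`.
lemma sq_pdt_initial_le (hD : IsExtendedDifferential T L u D) (hT : 0 < T)
    (hx : x ∈ Icc (-L) L) : pdt u 0 x ^ 2 ≤ D (0, x) (1, 0) ^ 2 := by
  have h0 : (0 : ℝ) ∈ Icc 0 T := left_mem_Icc.mpr hT.le
  have huniq := uniqueDiffOn_Icc hT 0 h0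
  rw [← (hD.hasDerivWithinAt_time h0 hx).derivWithin huniq]
  exact sq_deriv_le_sq_derivWithin huniq

lemma rectangle_mem_nhds (ht : t ∈ Ioo 0 T) (hx : x ∈ Ioo (-L) L) :
    Icc 0 T ×ˢ Icc (-L) L ∈ 𝓝 (t, x) :=
  prod_mem_nhds (Icc_mem_nhds ht.1 ht.2) (Icc_mem_nhds hx.1 hx.2)

lemma hasFDerivAt (hD : IsExtendedDifferential T L u D) (ht : t ∈ Ioo 0 T)
    (hx : x ∈ Ioo (-L) L) : HasFDerivAt (uncurry u) (D (t, x)) (t, x) :=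
  (hD.hasFDerivWithinAt (t, x) ⟨Ioo_subset_Icc_self ht, Ioo_subset_Icc_self hx⟩).hasFDerivAt
    (rectangle_mem_nhds ht hx)

-- Along the characteristic, `∂ₜu - ∂ₓu` has derivative `∂ₜ²u - ∂ₓ²u = 0`.
lemma dt_sub_dx_characteristic_eq (hD : IsExtendedDifferential T L u D) (hu : IsWaveSolution T L u)
    (hy : -L < y) (ht : 0 ≤ t) (htT : t ≤ T) (hyt : y + t ≤ L) :
    D (t, y + t) (1, -1) = D (0, y) (1, -1) := by
  have hderiv : ∀ s ∈ Ioo 0 t, HasDerivAt (fun s => D (s, y + s) (1, -1)) 0 s := by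
    intro s hs
    have hsT : s ∈ Ioo 0 T := ⟨hs.1, hs.2.trans_le htT⟩
    have hys : y + s ∈ Ioo (-L) L := ⟨by linarith [hs.1], by linarith [hs.2]⟩
    have hC2 : ContDiffAt ℝ 2 (uncurry u) (s, y + s) :=
      hu.contDiffOn.contDiffAt (rectangle_mem_nhds hsT hys)
    have hDeq : D =ᶠ[𝓝 (s, y + s)] fderiv ℝ (uncurry u) := by
      filter_upwards [prod_mem_nhds (Ioo_mem_nhds hsT.1 hsT.2) (Ioo_mem_nhds hys.1 hys.2)]
        with p hp
      exact (hD.hasFDerivAt hp.1 hp.2).fderiv.symm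
    have hcurve : HasDerivAt (fun s => (s, y + s)) ((1 : ℝ), (1 : ℝ)) s :=
      (hasDerivAt_id s).prodMk ((hasDerivAt_id s).const_add y)
    have hchain := HasFDerivAt.comp_hasDerivAt (f := fun s => (s, y + s)) s
      ((hasFDerivAt_fderiv_of_contDiffAt hC2).congr_of_eventuallyEq hDeq) hcurve
        |>.clm_apply (hasDerivAt_const s ((1 : ℝ), (-1 : ℝ)))
    refine hchain.congr_deriv ?_
    rw [map_zero, add_zero, ← pdt_pdt_sub_pdx_pdx_eq hC2, hu.wave_eq s hsT _ hys, sub_self]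
  have hcont : Continuous fun s => D (s, y + s) (1, -1) :=
    (hD.continuous.comp (by fun_prop)).clm_apply continuous_const
  have hFTC := intervalIntegral.integral_eq_sub_of_hasDerivAt_of_le ht hcont.continuousOn hderiv
    intervalIntegrable_const
  rw [intervalIntegral.integral_zero, add_zero] at hFTC
  exact sub_eq_zero.mp hFTC.symm

lemma hasDerivAt_comp_characteristic (hD : IsExtendedDifferential T L u D)
    (ht : x - y ∈ Ioo 0 T) (hx : x ∈ Ioo (-L) L) :
    HasDerivAt (fun x => u (x - y) x) (2 * D (x - y, x) (1, 0) - D (x - y, x) (1, -1)) x := by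
  have hcurve : HasDerivAt (fun x => (x - y, x)) ((1 : ℝ), (1 : ℝ)) x :=
    ((hasDerivAt_id x).sub_const y).prodMk (hasDerivAt_id x)
  refine ((hD.hasFDerivAt ht hx).comp_hasDerivAt (f := fun x => (x - y, x)) x hcurve).congr_deriv ?_
  rw [← smul_eq_mul, ← map_smul, ← map_sub]
  congr 1
  ext <;> norm_num

lemma sq_le_integral_of_initial_zero (hD : IsExtendedDifferential T L u D) (ht : t ∈ Icc 0 T)
    (hx : x ∈ Icc (-L) L) (h0 : u 0 x = 0) :
    u t x ^ 2 ≤ T * ∫ s in (0 : ℝ)..T, D (s, x) (1, 0) ^ 2 := by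
  have hcont : Continuous fun s => D (s, x) (1, 0) :=
    (hD.continuous.comp (by fun_prop)).clm_apply continuous_const
  have hcont2 : Continuous fun s => D (s, x) (1, 0) ^ 2 := hcont.pow 2
  have hFTC : ∫ s in (0 : ℝ)..t, D (s, x) (1, 0) = u t x := by
    rw [intervalIntegral.integral_eq_sub_of_hasDerivAt_of_le (f := fun s => u s x) ht.1 _ _
      (hcont.intervalIntegrable _ _), h0, sub_zero]
    · exact fun s hs =>
        (hD.hasDerivWithinAt_time ⟨hs.1, hs.2.trans ht.2⟩ hx).continuousWithinAt.mono
          (Icc_subset_Icc_right ht.2)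
    · exact fun s hs => (hD.hasDerivWithinAt_time ⟨hs.1.le, hs.2.le.trans ht.2⟩ hx).hasDerivAt
        (Icc_mem_nhds hs.1 (hs.2.trans_le ht.2))
  calc u t x ^ 2 ≤ (t - 0) * ∫ s in (0 : ℝ)..t, D (s, x) (1, 0) ^ 2 := hFTC ▸
        sq_intervalIntegral_le ht.1 (hcont.intervalIntegrable _ _) (hcont2.intervalIntegrable _ _)
    _ ≤ T * ∫ s in (0 : ℝ)..T, D (s, x) (1, 0) ^ 2 := by
      gcongr
      · exact intervalIntegral.integral_nonneg ht.1 fun s _ => sq_nonneg _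
      · exact ht.1.trans ht.2
      · linarith [ht.2]
      · exact intervalIntegral.integral_mono_interval le_rfl ht.1 ht.2
          (.of_forall fun s => sq_nonneg _) (hcont2.intervalIntegrable _ _)

variable {a c : ℝ}

lemma sq_dt_sub_dx_initial_le (hD : IsExtendedDifferential T L u D) (hu : IsWaveSolution T L u)
    (hy : -L < y) (hya : y ≤ a) (hac : a < c) (hcL : c ≤ L) (hcT : c - y ≤ T)
    (h0 : ∀ x ∈ Ioo a c, u 0 x = 0) :
    D (0, y) (1, -1) ^ 2 ≤ 18 / (c - a) * (∫ x in a..c, D (x - y, x) (1, 0) ^ 2) +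
      72 * T / (c - a) ^ 3 * ∫ x in a..c, ∫ t in (0 : ℝ)..T, D (t, x) (1, 0) ^ 2 := by
  have hlen : 0 < c - a := sub_pos.mpr hac
  have hmaps : ∀ x ∈ Icc a c, (x - y, x) ∈ Icc 0 T ×ˢ Icc (-L) L := fun x hx =>
    ⟨⟨by linarith [hx.1], by linarith [hx.2]⟩, ⟨by linarith [hx.1], hx.2.trans hcL⟩⟩
  have hv : ContinuousOn (fun x => u (x - y) x) (Icc a c) :=
    hu.contDiffOn.continuousOn.comp (f := fun x => (x - y, x)) (by fun_prop) hmaps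
  have hz : Continuous fun x => 2 * D (x - y, x) (1, 0) :=
    ((hD.continuous.comp (by fun_prop)).clm_apply continuous_const).const_mul 2
  have hderiv : ∀ x ∈ Ioo a c, HasDerivAt (fun x => u (x - y) x)
      (2 * D (x - y, x) (1, 0) - D (0, y) (1, -1)) x := by
    intro x hx
    have htransport := hD.dt_sub_dx_characteristic_eq hu hy (t := x - y) (by linarith [hx.1])
      (by linarith [hx.2]) (by linarith [hx.2])
    rw [← htransport, add_sub_cancel]
    exact hD.hasDerivAt_comp_characteristic ⟨by linarith [hx.1], by linarith [hx.2]⟩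
      ⟨by linarith [hx.1], by linarith [hx.2]⟩
  have hinner : Continuous fun x => ∫ t in (0 : ℝ)..T, D (t, x) (1, 0) ^ 2 :=
    intervalIntegral.continuous_parametric_intervalIntegral_of_continuous'
      (((hD.continuous.comp continuous_swap).clm_apply continuous_const).pow 2) 0 T
  have hvsq : ∫ x in a..c, u (x - y) x ^ 2 ≤
      T * ∫ x in a..c, ∫ t in (0 : ℝ)..T, D (t, x) (1, 0) ^ 2 := by
    rw [← intervalIntegral.integral_const_mul]
    refine intervalIntegral.integral_mono_on_of_le_Ioo hac.le
      ((hv.pow 2).intervalIntegrable_of_Icc hac.le) ((hinner.const_mul T).intervalIntegrable _ _)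
      fun x hx => ?_
    have hmem := hmaps x (Ioo_subset_Icc_self hx)
    exact hD.sq_le_integral_of_initial_zero hmem.1 hmem.2 (h0 x hx)
  calc D (0, y) (1, -1) ^ 2
      ≤ 9 / (2 * (c - a)) * (∫ x in a..c, (2 * D (x - y, x) (1, 0)) ^ 2) +
          72 / (c - a) ^ 3 * ∫ x in a..c, u (x - y) x ^ 2 :=
        sq_le_of_hasDerivAt_sub_const hac hv hz.continuousOn hderiv
    _ ≤ 9 / (2 * (c - a)) * (∫ x in a..c, (2 * D (x - y, x) (1, 0)) ^ 2) + 72 / (c - a) ^ 3 *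
          (T * ∫ x in a..c, ∫ t in (0 : ℝ)..T, D (t, x) (1, 0) ^ 2) := by gcongr
    _ = _ := by
      simp only [mul_pow, intervalIntegral.integral_const_mul]
      field_simp
      ring

lemma integral_sq_dt_sub_dx_initial_le {r : ℝ} (hD : IsExtendedDifferential T L u D)
    (hu : IsWaveSolution T L u) (hr : 0 ≤ r) (hra : r ≤ a) (hac : a < c) (hcL : c ≤ L)
    (hcT : c + r ≤ T) (h0 : ∀ x ∈ Ioo a c, u 0 x = 0) :
    ∫ y in -r..r, D (0, y) (1, -1) ^ 2 ≤ (18 / (c - a) + 144 * r * T / (c - a) ^ 3) *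
      ∫ t in (0 : ℝ)..T, ∫ x in a..c, D (t, x) (1, 0) ^ 2 := by
  have _ : 0 < c - a := sub_pos.mpr hac
  have hrr : -r ≤ r := by linarith
  set J := ∫ t in (0 : ℝ)..T, ∫ x in a..c, D (t, x) (1, 0) ^ 2
  have hDt : Continuous (uncurry fun t x => D (t, x) (1, 0) ^ 2) :=
    (hD.continuous.clm_apply continuous_const).pow 2
  have hshear : Continuous fun y => ∫ x in a..c, D (x - y, x) (1, 0) ^ 2 :=
    intervalIntegral.continuous_parametric_intervalIntegral_of_continuous'
      (f := fun y x => D (x - y, x) (1, 0) ^ 2)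
      (hDt.comp (by fun_prop : Continuous fun p : ℝ × ℝ => (p.2 - p.1, p.2))) a c
  have hw : Continuous fun y => D (0, y) (1, -1) ^ 2 :=
    ((hD.continuous.comp (by fun_prop)).clm_apply continuous_const).pow 2
  calc ∫ y in -r..r, D (0, y) (1, -1) ^ 2
      ≤ ∫ y in -r..r, (18 / (c - a) * (∫ x in a..c, D (x - y, x) (1, 0) ^ 2) +
          72 * T / (c - a) ^ 3 * J) := by
        refine intervalIntegral.integral_mono_on hrr (hw.intervalIntegrable _ _)
          (((hshear.const_mul _).add continuous_const).intervalIntegrable _ _) fun y hy => ?_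
        rw [show J = ∫ x in a..c, ∫ t in (0 : ℝ)..T, D (t, x) (1, 0) ^ 2 from
          intervalIntegral_swap_of_continuous hDt 0 T a c]
        exact hD.sq_dt_sub_dx_initial_le hu (by linarith [hy.1]) (hy.2.trans hra) hac hcL
          (by linarith [hy.1]) h0
    _ = 18 / (c - a) * (∫ y in -r..r, ∫ x in a..c, D (x - y, x) (1, 0) ^ 2) +
          2 * r * (72 * T / (c - a) ^ 3 * J) := by
        rw [intervalIntegral.integral_add ((hshear.const_mul _).intervalIntegrable _ _)
          intervalIntegrable_const, intervalIntegral.integral_const_mul,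
          intervalIntegral.integral_const, smul_eq_mul, sub_neg_eq_add, two_mul]
    _ ≤ 18 / (c - a) * J + 2 * r * (72 * T / (c - a) ^ 3 * J) := by
        gcongr
        exact intervalIntegral_comp_shear_le hDt (fun _ _ => sq_nonneg _) hrr hac.le hra
          (by linarith)
    _ = _ := by ring

lemma integral_sq_le_setIntegral_pdt {S : Set ℝ} (hD : IsExtendedDifferential T L u D)
    (hT : 0 ≤ T) (hac : a ≤ c) (hS : MeasurableSet S) (hacS : Ioo a c ⊆ S)
    (hSL : S ⊆ Icc (-L) L) :
    ∫ t in (0 : ℝ)..T, ∫ x in a..c, D (t, x) (1, 0) ^ 2 ≤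
      ∫ t in Ioo 0 T, ∫ x in S, pdt u t x ^ 2 := by
  have hDt : Continuous fun p => D p (1, 0) ^ 2 := (hD.continuous.clm_apply continuous_const).pow 2
  have hint : IntegrableOn (fun p => D p (1, 0) ^ 2) (Ioo 0 T ×ˢ S) (volume.prod volume) :=
    (hDt.continuousOn.integrableOn_compact (isCompact_Icc.prod isCompact_Icc)).mono_set
      (prod_mono Ioo_subset_Icc_self hSL)
  have hprod : Ioo 0 T ×ˢ Ioo a c ⊆ Ioo 0 T ×ˢ S := prod_mono_right hacS
  calc ∫ t in (0 : ℝ)..T, ∫ x in a..c, D (t, x) (1, 0) ^ 2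
      = ∫ p in Ioo 0 T ×ˢ Ioo a c, D p (1, 0) ^ 2 ∂volume.prod volume := by
        simp only [intervalIntegral.integral_of_le hT, intervalIntegral.integral_of_le hac,
          integral_Ioc_eq_integral_Ioo]
        exact (setIntegral_prod _ (hint.mono_set hprod)).symm
    _ ≤ ∫ p in Ioo 0 T ×ˢ S, D p (1, 0) ^ 2 ∂volume.prod volume :=
        setIntegral_mono_set hint (.of_forall fun _ => sq_nonneg _) hprod.eventuallyLE
    _ = ∫ t in Ioo 0 T, ∫ x in S, D (t, x) (1, 0) ^ 2 := setIntegral_prod _ hint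
    _ = ∫ t in Ioo 0 T, ∫ x in S, pdt u t x ^ 2 :=
        setIntegral_congr_fun measurableSet_Ioo fun t ht =>
          setIntegral_congr_fun hS fun x hx => by rw [hD.pdt_eq ht (hSL hx)]

lemma initial_energy_le {r : ℝ} (hD : IsExtendedDifferential T L u D) (hT : 0 < T) (hr : 0 ≤ r)
    (hrL : r < L) (hsupp : ∀ x, r < |x| → |x| < L → u 0 x = 0 ∧ pdt u 0 x = 0) :
    ∫ x in Ioo (-L) L, (pdx u 0 x ^ 2 + pdt u 0 x ^ 2) ≤
      1 / 2 * ((∫ y in -r..r, D (0, y) (1, -1) ^ 2) + ∫ y in -r..r, D (0, y) (1, 1) ^ 2) := by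
  have hsub : Icc (-r) r ⊆ Ioo (-L) L := Icc_subset_Ioo (by linarith) hrL
  have hzero : ∀ x ∈ Ioo (-L) L \ Icc (-r) r, pdx u 0 x ^ 2 + pdt u 0 x ^ 2 = 0 := by
    rintro x ⟨hxL, hxr⟩
    have hx : |x| ∈ Ioo r L := ⟨not_le.mp fun h => hxr (abs_le.mp h), abs_lt.mpr hxL⟩
    have hu0 : u 0 =ᶠ[𝓝 x] fun _ => 0 :=
      (continuous_abs.continuousAt.eventually (Ioo_mem_nhds hx.1 hx.2)).mono fun y hy =>
        (hsupp y hy.1 hy.2).1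
    have hpdx : pdx u 0 x = 0 := hu0.deriv_eq.trans (deriv_const x 0)
    rw [hpdx, (hsupp x hx.1 hx.2).2]
    norm_num
  have hcont (e : ℝ × ℝ) : Continuous fun y => D (0, y) e ^ 2 :=
    ((hD.continuous.comp (by fun_prop)).clm_apply continuous_const).pow 2
  have hle : ∀ x ∈ Icc (-r) r, pdx u 0 x ^ 2 + pdt u 0 x ^ 2 ≤
      1 / 2 * (D (0, x) (1, -1) ^ 2 + D (0, x) (1, 1) ^ 2) := by
    intro x hx
    have hpdt := hD.sq_pdt_initial_le hT (Ioo_subset_Icc_self (hsub hx))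
    rw [hD.pdx_eq (left_mem_Icc.mpr hT.le) (hsub hx),
      show ((1 : ℝ), (-1 : ℝ)) = (1, 0) - (0, 1) by simp,
      show ((1 : ℝ), (1 : ℝ)) = (1, 0) + (0, 1) by simp, map_sub, map_add]
    linarith
  rw [setIntegral_eq_of_subset_of_forall_sdiff_eq_zero measurableSet_Ioo hsub hzero,
    ← intervalIntegral.integral_add ((hcont _).intervalIntegrable _ _)
      ((hcont _).intervalIntegrable _ _), ← intervalIntegral.integral_const_mul,
    intervalIntegral.integral_of_le (by linarith), ← integral_Icc_eq_integral_Ioc]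
  refine integral_mono_of_nonneg (.of_forall fun _ => by positivity)
    (((hcont _).add (hcont _)).const_mul _).integrableOn_Icc ?_
  exact (ae_restrict_iff' measurableSet_Icc).mpr (.of_forall hle)

end IsExtendedDifferential

section Reflection

variable {T L : ℝ} {u : ℝ → ℝ → ℝ} {D : ℝ × ℝ → ℝ × ℝ →L[ℝ] ℝ}

/-- The reflection `(t, x) ↦ (t, -x)`, which exchanges right- and left-moving waves. -/
def spaceReflection : ℝ × ℝ →L[ℝ] ℝ × ℝ :=
  (ContinuousLinearMap.id ℝ ℝ).prodMap (-ContinuousLinearMap.id ℝ ℝ)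

lemma spaceReflection_apply (p : ℝ × ℝ) : spaceReflection p = (p.1, -p.2) := rfl

lemma mapsTo_spaceReflection :
    MapsTo spaceReflection (Icc 0 T ×ˢ Icc (-L) L) (Icc 0 T ×ˢ Icc (-L) L) :=
  fun _ hp => ⟨hp.1, neg_le_neg hp.2.2, neg_le.mp hp.2.1⟩

lemma pdx_pdx_comp_neg (t x : ℝ) :
    pdx (pdx fun t x => u t (-x)) t x = pdx (pdx u) t (-x) := by
  have hpdx : pdx (fun t x => u t (-x)) = fun t x => -pdx u t (-x) :=
    funext₂ fun t x => deriv_comp_neg (u t) x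
  rw [hpdx]
  exact (deriv.fun_neg ..).trans (neg_eq_iff_eq_neg.mpr (deriv_comp_neg (pdx u t) x))

lemma IsWaveSolution.comp_neg (hu : IsWaveSolution T L u) :
    IsWaveSolution T L fun t x => u t (-x) where
  contDiffOn := hu.contDiffOn.comp spaceReflection.contDiff.contDiffOn mapsTo_spaceReflection
  wave_eq t ht x hx := (hu.wave_eq t ht (-x) ⟨neg_lt_neg hx.2, neg_lt.mp hx.1⟩).trans
    (pdx_pdx_comp_neg t x).symm

lemma IsExtendedDifferential.comp_neg (hD : IsExtendedDifferential T L u D) :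
    IsExtendedDifferential T L (fun t x => u t (-x))
      fun p => (D (spaceReflection p)).comp spaceReflection where
  continuous := (hD.continuous.comp spaceReflection.continuous).clm_comp continuous_const
  hasFDerivWithinAt p hp :=
    (hD.hasFDerivWithinAt (spaceReflection p) (mapsTo_spaceReflection hp)).comp p
      spaceReflection.hasFDerivWithinAt mapsTo_spaceReflection

lemma IsExtendedDifferential.integral_sq_dt_add_dx_initial_le {r a c : ℝ}
    (hD : IsExtendedDifferential T L u D) (hu : IsWaveSolution T L u) (hr : 0 ≤ r) (hra : r ≤ a)
    (hac : a < c) (hcL : c ≤ L) (hcT : c + r ≤ T) (h0 : ∀ x ∈ Ioo (-c) (-a), u 0 x = 0) :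
    ∫ y in -r..r, D (0, y) (1, 1) ^ 2 ≤ (18 / (c - a) + 144 * r * T / (c - a) ^ 3) *
      ∫ t in (0 : ℝ)..T, ∫ x in -c..-a, D (t, x) (1, 0) ^ 2 := by
  have hreflected := hD.comp_neg.integral_sq_dt_sub_dx_initial_le hu.comp_neg hr hra hac hcL hcT
    fun x hx => h0 (-x) ⟨neg_lt_neg hx.2, neg_lt_neg hx.1⟩
  simp only [ContinuousLinearMap.comp_apply, spaceReflection_apply, neg_neg, neg_zero] at hreflected
  rw [intervalIntegral.integral_comp_neg (fun y => D (0, y) (1, 1) ^ 2), neg_neg] at hreflected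
  have hflip (t : ℝ) :
      ∫ x in a..c, D (t, -x) (1, 0) ^ 2 = ∫ x in -c..-a, D (t, x) (1, 0) ^ 2 :=
    intervalIntegral.integral_comp_neg fun x => D (t, x) (1, 0) ^ 2
  simpa only [hflip] using hreflected

end Reflection

theorem observability_1d_localized_general {T L b r : ℝ} (hr : 0 ≤ r) (hrb : r ≤ b) (hbL : b < L)
    (hT : b + r < T) :
    ∃ C : ℝ, 0 < C ∧ ∀ u : ℝ → ℝ → ℝ, IsWaveSolution T L u →
      (∀ x, r < |x| → |x| < L → u 0 x = 0 ∧ pdt u 0 x = 0) →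
      ∫ x in Ioo (-L) L, (pdx u 0 x ^ 2 + pdt u 0 x ^ 2) ≤
        C * ∫ t in Ioo 0 T, ∫ x in Ioo (-L) (-b) ∪ Ioo b L, pdt u t x ^ 2 := by
  obtain ⟨c, hbc, hc⟩ : ∃ c, b < c ∧ c ≤ min (T - r) L :=
    ⟨_, lt_min (by linarith) hbL, le_rfl⟩
  have hcT : c + r ≤ T := by linarith [hc.trans (min_le_left _ _)]
  have hcL : c ≤ L := hc.trans (min_le_right _ _)
  have _ : 0 < c - b := sub_pos.mpr hbc
  have hT0 : 0 < T := by linarith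
  refine ⟨18 / (c - b) + 144 * r * T / (c - b) ^ 3, by positivity, fun u hu hsupp => ?_⟩
  obtain ⟨D, hD⟩ := hu.exists_isExtendedDifferential hT0 (by linarith)
  have hS : MeasurableSet (Ioo (-L) (-b) ∪ Ioo b L) := measurableSet_Ioo.union measurableSet_Ioo
  have hSL : Ioo (-L) (-b) ∪ Ioo b L ⊆ Icc (-L) L :=
    union_subset (fun x hx => ⟨hx.1.le, by linarith [hx.2]⟩)
      fun x hx => ⟨by linarith [hx.1], hx.2.le⟩
  have hu0 : ∀ x, b < |x| → |x| < c → u 0 x = 0 := fun x hbx hxc =>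
    (hsupp x (hrb.trans_lt hbx) (hxc.trans_le hcL)).1
  have hright := hD.integral_sq_dt_sub_dx_initial_le hu hr hrb hbc hcL hcT fun x hx => by
    have habs : |x| = x := abs_of_nonneg (by linarith [hx.1])
    exact hu0 x (by rw [habs]; exact hx.1) (by rw [habs]; exact hx.2)
  have hleft := hD.integral_sq_dt_add_dx_initial_le hu hr hrb hbc hcL hcT fun x hx => by
    have habs : |x| = -x := abs_of_nonpos (by linarith [hx.2])
    exact hu0 x (by rw [habs]; exact lt_neg.mp hx.2) (by rw [habs]; exact neg_lt.mp hx.1)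
  have hobsRight := hD.integral_sq_le_setIntegral_pdt hT0.le hbc.le hS
    ((Ioo_subset_Ioo_right hcL).trans subset_union_right) hSL
  have hobsLeft := hD.integral_sq_le_setIntegral_pdt hT0.le (neg_le_neg hbc.le) hS
    ((Ioo_subset_Ioo_left (neg_le_neg hcL)).trans subset_union_left) hSL
  have hrightS := hright.trans (mul_le_mul_of_nonneg_left hobsRight (by positivity))
  have hleftS := hleft.trans (mul_le_mul_of_nonneg_left hobsLeft (by positivity))
  linarith [hD.initial_energy_le hT0 hr (hrb.trans_lt hbL) hsupp]

theorem observability_1d_localized (T : ℝ) (hT : 1 < T) :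
    ∃ C : ℝ, 0 < C ∧
      ∀ u : ℝ → ℝ → ℝ,
        -- u is of class C² on [0,T] × [−1,1]
        ContDiffOn ℝ 2 (Function.uncurry u) (Set.Icc 0 T ×ˢ Set.Icc (-1 : ℝ) 1) →
        -- u solves the wave equation on [0,T] × [−1,1]
        (∀ t ∈ Set.Icc (0 : ℝ) T, ∀ x ∈ Set.Icc (-1 : ℝ) 1,
          pdt (pdt u) t x = pdx (pdx u) t x) →
        -- Dirichlet boundary conditions
        (∀ t ∈ Set.Icc (0 : ℝ) T, u t (-1) = 0 ∧ u t 1 = 0) →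
        -- initial data supported in [−1/4, 1/4]
        (∀ x : ℝ, 1 / 4 ≤ |x| → |x| ≤ 1 → u 0 x = 0 ∧ pdt u 0 x = 0) →
        -- observability inequality
        ∫ x in Set.Ioo (-1 : ℝ) 1, ((pdx u 0 x) ^ 2 + (pdt u 0 x) ^ 2) ≤
          C * ∫ t in Set.Ioo (0 : ℝ) T,
                ∫ x in (Set.Ioo (-1 : ℝ) (-3 / 4) ∪ Set.Ioo (3 / 4 : ℝ) 1),
                  (pdt u t x) ^ 2 := by
  obtain ⟨C, hC, hobs⟩ := observability_1d_localized_general (T := T) (L := 1) (b := 3 / 4)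
    (r := 1 / 4) (by norm_num) (by norm_num) (by norm_num) (by linarith)
  refine ⟨C, hC, fun u hu hwave _ hsupp => ?_⟩
  rw [neg_div]
  exact hobs u ⟨hu, fun t ht x hx => hwave t (Ioo_subset_Icc_self ht) x (Ioo_subset_Icc_self hx)⟩
    fun x hrx hxL => hsupp x hrx.le hxL.le
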